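/- Fix c = 3. Let T ≥ 2, k ≥ 1 and 1 ≤ ℓ ≤ k be integers, let μ* ∈ (0, 1] be real, let m_1, …, m_ℓ be positive integers with ∑_{i=1}^ℓ m_i ≤ T, and let n_1, …, n_ℓ be positive integers with n_i ≥ m_i and μ*·n_i ≥ 64·c²·log T for every i. Then ∏_{i=1}^ℓ (1 − 4c√(log T/(μ*·n_i)))^{m_i/T} ≥ 1 − 8c√(k·log T/(μ*·T)). (The key deterministic product inequality in the Phase 2 analysis of Lemma 4.2 for the Modified NCB algorithm, combining the numeric inequality (1−x)^a ≥ 1−2ax with the Cauchy–Schwarz inequality.) -/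

import Mathlib

/-!
For `0 ≤ x ≤ 1 / 2` we have `(1 - x) * (1 + 2 * x) ≥ 1`, hence `1 - x ≥ exp (-2 * x)`. Raising this
to the powers `w i` and multiplying, the exponents add up, and `exp (-y) ≥ 1 - y` turns the product
into `1 - 2 * ∑ i, w i * x i`. For `w i = m i / T` and `x i` proportional to `√(L / (μ * n i))`,
the sum is controlled by Cauchy–Schwarz, because `m i ≤ n i` makes each squared term at most linear
in `m i`.
-/

theorem exp_neg_two_mul_le_one_sub {x : ℝ} (hx0 : 0 ≤ x) (hx : x ≤ 1 / 2) :
    Real.exp (-(2 * x)) ≤ 1 - x := by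
  rw [Real.exp_neg]
  calc (Real.exp (2 * x))⁻¹ ≤ (2 * x + 1)⁻¹ := by
        gcongr
        exact Real.add_one_le_exp _
    _ ≤ 1 - x := by
        rw [inv_le_iff_one_le_mul₀ (by positivity)]
        nlinarith

theorem one_sub_two_mul_sum_le_prod_one_sub_rpow {ι : Type*} {s : Finset ι} {w x : ι → ℝ}
    (hw : ∀ i ∈ s, 0 ≤ w i) (hx0 : ∀ i ∈ s, 0 ≤ x i) (hx : ∀ i ∈ s, x i ≤ 1 / 2) :
    1 - 2 * ∑ i ∈ s, w i * x i ≤ ∏ i ∈ s, (1 - x i) ^ w i :=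
  calc 1 - 2 * ∑ i ∈ s, w i * x i ≤ Real.exp (-(2 * ∑ i ∈ s, w i * x i)) :=
        Real.one_sub_le_exp_neg _
    _ = ∏ i ∈ s, Real.exp (-(2 * x i)) ^ w i := by
        simp only [← Real.exp_mul, ← Real.exp_sum, Finset.mul_sum, ← Finset.sum_neg_distrib]
        congr! 2
        ring
    _ ≤ ∏ i ∈ s, (1 - x i) ^ w i :=
        Finset.prod_le_prod (fun i _ => by positivity) fun i hi =>
          Real.rpow_le_rpow (Real.exp_nonneg _)
            (exp_neg_two_mul_le_one_sub (hx0 i hi) (hx i hi)) (hw i hi)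

theorem sum_mul_sqrt_div_le_sqrt_card_mul {ι : Type*} {s : Finset ι} {m n : ι → ℝ} {r : ℝ}
    (hr : 0 ≤ r) (hm : ∀ i ∈ s, 0 ≤ m i) (hn : ∀ i ∈ s, 0 < n i) (hmn : ∀ i ∈ s, m i ≤ n i) :
    ∑ i ∈ s, m i * √(r / n i) ≤ √(s.card * (r * ∑ i ∈ s, m i)) := by
  have sq_term_le (i) (hi : i ∈ s) : (m i * √(r / n i)) ^ 2 ≤ r * m i := by
    have hni := hn i hi
    calc (m i * √(r / n i)) ^ 2 = r * m i * (m i / n i) := by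
          rw [mul_pow, Real.sq_sqrt (by positivity)]
          ring
      _ ≤ r * m i := mul_le_of_le_one_right (mul_nonneg hr (hm i hi))
          (div_le_one_of_le₀ (hmn i hi) hni.le)
  refine Real.le_sqrt_of_sq_le (sq_sum_le_card_mul_sum_sq.trans ?_)
  rw [Finset.mul_sum _ _ r]
  gcongr with i hi
  exact sq_term_le i hi

theorem sum_div_mul_sqrt_div_le_sqrt_card_mul_div {ι : Type*} {s : Finset ι} {m n : ι → ℝ}
    {r T : ℝ} (hr : 0 ≤ r) (hT : 0 < T) (hm : ∀ i ∈ s, 0 ≤ m i) (hsum : ∑ i ∈ s, m i ≤ T)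
    (hn : ∀ i ∈ s, 0 < n i) (hmn : ∀ i ∈ s, m i ≤ n i) :
    ∑ i ∈ s, m i / T * √(r / n i) ≤ √(s.card * r / T) :=
  calc ∑ i ∈ s, m i / T * √(r / n i) = ∑ i ∈ s, m i / T * √(r / T / (n i / T)) := by
        simp only [div_div_div_cancel_right₀ hT.ne']
    _ ≤ √(s.card * (r / T * ∑ i ∈ s, m i / T)) :=
        sum_mul_sqrt_div_le_sqrt_card_mul (div_nonneg hr hT.le)
          (fun i hi => div_nonneg (hm i hi) hT.le) (fun i hi => div_pos (hn i hi) hT)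
          fun i hi => div_le_div_of_nonneg_right (hmn i hi) hT.le
    _ ≤ √(s.card * (r / T * 1)) := by
        rw [← Finset.sum_div]
        gcongr
        exact div_le_one_of_le₀ hsum hT.le
    _ = √(s.card * r / T) := by rw [mul_one, mul_div_assoc]

theorem mul_sqrt_div_le_of_sq_mul_le_sq_mul {a b x y : ℝ} (hb : 0 ≤ b) (hx : 0 ≤ x) (hy : 0 < y)
    (h : a ^ 2 * x ≤ b ^ 2 * y) : a * √(x / y) ≤ b := by
  have hsq : (a * √(x / y)) ^ 2 ≤ b ^ 2 := by
    rwa [mul_pow, Real.sq_sqrt (by positivity), mul_div_assoc', div_le_iff₀ hy]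
  exact (abs_le_of_sq_le_sq' hsq hb).2

theorem modified_phase_two_product_bound_general {ι : Type*} [Fintype ι] {c T k L μ : ℝ}
    {m n : ι → ℝ} (hc : 0 ≤ c) (hT : 0 < T) (hk : Fintype.card ι ≤ k) (hL : 0 ≤ L) (hμ : 0 < μ)
    (hm : ∀ i, 0 ≤ m i) (hsum : ∑ i, m i ≤ T) (hn : ∀ i, 0 < n i) (hmn : ∀ i, m i ≤ n i)
    (hμn : ∀ i, 64 * c ^ 2 * L ≤ μ * n i) :
    1 - 8 * c * √(k * L / (μ * T)) ≤ ∏ i, (1 - 4 * c * √(L / (μ * n i))) ^ (m i / T) := by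
  have hx : ∀ i, 4 * c * √(L / (μ * n i)) ≤ 1 / 2 := fun i =>
    mul_sqrt_div_le_of_sq_mul_le_sq_mul (by norm_num) hL (mul_pos hμ (hn i)) (by linarith [hμn i])
  have hcauchy : ∑ i, m i / T * √(L / (μ * n i)) ≤ √(k * L / (μ * T)) :=
    calc ∑ i, m i / T * √(L / (μ * n i)) = ∑ i, m i / T * √(L / μ / n i) := by
          simp only [div_div]
      _ ≤ √(Fintype.card ι * (L / μ) / T) :=
          sum_div_mul_sqrt_div_le_sqrt_card_mul_div (div_nonneg hL hμ.le) hT (fun i _ => hm i)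
            hsum (fun i _ => hn i) fun i _ => hmn i
      _ ≤ √(k * (L / μ) / T) := by gcongr
      _ = √(k * L / (μ * T)) := by rw [mul_div_assoc', div_div]
  calc 1 - 8 * c * √(k * L / (μ * T))
      ≤ 1 - 8 * c * ∑ i, m i / T * √(L / (μ * n i)) := by gcongr
    _ = 1 - 2 * ∑ i, m i / T * (4 * c * √(L / (μ * n i))) := by
        simp only [mul_left_comm _ (4 * c), ← Finset.mul_sum]
        ring
    _ ≤ ∏ i, (1 - 4 * c * √(L / (μ * n i))) ^ (m i / T) :=
        one_sub_two_mul_sum_le_prod_one_sub_rpow (fun i _ => div_nonneg (hm i) hT.le)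
          (fun i _ => by positivity) fun i _ => hx i

/-- The key deterministic product inequality in the Phase 2 analysis of Lemma 4.2
(with `c = 3`): if `ℓ ≤ k`, `∑ m_i ≤ T`, `n_i ≥ m_i` and `μ* n_i ≥ 64 c² log T` for every
`i`, then `∏_i (1 − 4c√(log T/(μ* n_i)))^(m_i/T) ≥ 1 − 8c√(k log T/(μ* T))`.
Here `^` denotes the real power `Real.rpow`. -/
theorem modified_phase_two_product_bound (c : ℝ) (hc : c = 3)
    (T k ℓ : ℕ) (hT : 2 ≤ T) (hk : 1 ≤ k) (hℓ1 : 1 ≤ ℓ) (hℓk : ℓ ≤ k)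
    (μstar : ℝ) (hμs0 : 0 < μstar) (hμs1 : μstar ≤ 1)
    (m n : Fin ℓ → ℕ)
    (hm : ∀ i, 0 < m i) (hsum : ∑ i, m i ≤ T)
    (hn : ∀ i, 0 < n i) (hnm : ∀ i, m i ≤ n i)
    (hμn : ∀ i, μstar * n i ≥ 64 * c ^ 2 * Real.log T) :
    ∏ i, (1 - 4 * c * Real.sqrt (Real.log T / (μstar * n i))) ^ ((m i : ℝ) / T) ≥
      1 - 8 * c * Real.sqrt ((k : ℝ) * Real.log T / (μstar * T)) :=
  modified_phase_two_product_bound_general (by linarith) (by positivity) (by simpa using hℓk)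
    (Real.log_natCast_nonneg T) hμs0 (fun i => (m i).cast_nonneg) (by exact_mod_cast hsum)
    (by exact_mod_cast hn) (by exact_mod_cast hnm) hμn
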